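/- arXiv:0905.0913 — 2 statements merged into one kernel-verified Lean document; each statement's English description precedes it below -/
import Mathlib

section
/- Let A be an (n,m)-biregular tree with n, m ≥ 3. Then every translation belonging to Aut⁺(A) is a composition of two rotations belonging to Aut⁺(A). -/
/-!
Only one thing about the translation `τ` matters: it moves some vertex `x` (indeed any) to a
vertex `τ x` at even positive distance, because elements of `Aut⁺` preserve the two color classes
(`color_autPlus`, `color_eq_iff`). Let `v` be the midpoint of the geodesic from `x` to `τ x`.
Since `v` has at least three neighbors, it has a neighbor `b` that lies on neither half of this
geodesic, so that `x` and `τ x` are equidistant from `b`, both beyond `v`. In a biregular tree the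
stabilizer of a vertex is transitive on spheres around it (`exists_aut_fixing_root`), so some
automorphism `ρ` fixes `b` and sends `x` to `τ x`; as `v` is the first vertex after `b` on both
geodesics, `ρ` fixes `v` too. Hence `ρ` fixes an edge pointwise and lies in `Aut⁺`, while `ρ⁻¹ τ`
lies in `Aut⁺` and fixes `x`. Thus `τ = ρ (ρ⁻¹ τ)` is the required decomposition.

Sphere transitivity is proved by building the automorphism outwards from the root, extending each
`u ↦ w` to a bijection between the children of `u` and those of `w` that also carries the geodesic
to `x` onto the geodesic to `y` (`exists_child_matching`).
-/

open Pointwise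

namespace BSTrees

universe u

variable {V : Type u} {I : Type*}

/-- `π` is an automorphism of the graph `G`. -/
def IsAut (G : SimpleGraph V) (π : Equiv.Perm V) : Prop :=
  ∀ x y : V, G.Adj (π x) (π y) ↔ G.Adj x y

/-- The automorphism group of `G`, as a subgroup of `Equiv.Perm V`. -/
def autGroup (G : SimpleGraph V) : Subgroup (Equiv.Perm V) where
  carrier := {π | IsAut G π}
  one_mem' := fun _ _ => Iff.rfl
  mul_mem' := fun {a b} ha hb x y => (ha (b x) (b y)).trans (hb x y)
  inv_mem' := fun {a} ha x y => by
    have h := (ha (a⁻¹ x) (a⁻¹ y)).symm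
    simpa using h

/-- `z` lies on the geodesic between `x` and `y`. -/
def OnGeodesic (G : SimpleGraph V) (x y z : V) : Prop :=
  G.dist x z + G.dist z y = G.dist x y

/-- A set of vertices closed under geodesics (inducing a subtree). -/
def GeodClosed (G : SimpleGraph V) (S : Set V) : Prop :=
  ∀ x ∈ S, ∀ y ∈ S, ∀ z, OnGeodesic G x y z → z ∈ S

/-- A rotation: an automorphism fixing some vertex. -/
def IsRotation (π : Equiv.Perm V) : Prop := ∃ v, π v = v

/-- An inversion (symmetry): an automorphism swapping the endpoints of some edge. -/
def IsInversion (G : SimpleGraph V) (π : Equiv.Perm V) : Prop :=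
  ∃ x y, G.Adj x y ∧ π x = y ∧ π y = x

/-- A translation: neither a rotation nor an inversion. -/
def IsTranslation (G : SimpleGraph V) (π : Equiv.Perm V) : Prop :=
  ¬ IsRotation π ∧ ¬ IsInversion G π

/-- `ℓ` is the translation length of `π`: the minimum of `dist s (π s)`. -/
def TranslationLengthIs (G : SimpleGraph V) (π : Equiv.Perm V) (ℓ : ℕ) : Prop :=
  IsLeast {d | ∃ s, G.dist s (π s) = d} ℓ

/-- Elements of `H` pointwise stabilizing some edge of `G`. -/
def edgeStabilizers (G : SimpleGraph V) (H : Subgroup (Equiv.Perm V)) :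
    Set (Equiv.Perm V) :=
  {π | π ∈ H ∧ ∃ x y, G.Adj x y ∧ π x = x ∧ π y = y}

/-- `H⁺`: the subgroup generated by pointwise stabilizers in `H` of edges. -/
def plusGroup (G : SimpleGraph V) (H : Subgroup (Equiv.Perm V)) :
    Subgroup (Equiv.Perm V) :=
  Subgroup.closure (edgeStabilizers G H)

/-- The group of color-preserving automorphisms of the colored tree `(G, f)`. -/
def autf (G : SimpleGraph V) (f : V → I) : Subgroup (Equiv.Perm V) where
  carrier := {π | IsAut G π ∧ ∀ v, f (π v) = f v}
  one_mem' := ⟨fun _ _ => Iff.rfl, fun _ => rfl⟩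
  mul_mem' := fun {a b} ha hb =>
    ⟨fun x y => (ha.1 (b x) (b y)).trans (hb.1 x y),
     fun v => (ha.2 (b v)).trans (hb.2 v)⟩
  inv_mem' := fun {a} ha => by
    refine ⟨fun x y => ?_, fun v => ?_⟩
    · have h := (ha.1 (a⁻¹ x) (a⁻¹ y)).symm
      simpa using h
    · have h := (ha.2 (a⁻¹ v)).symm
      simpa using h

/-- `Aut_f⁺(A)`. -/
def autfPlus (G : SimpleGraph V) (f : V → I) : Subgroup (Equiv.Perm V) :=
  plusGroup G (autf G f)

/-- `Aut⁺(A)`. -/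
def autPlus (G : SimpleGraph V) : Subgroup (Equiv.Perm V) :=
  plusGroup G (autGroup G)

/-- A ray in `G`. -/
def IsRay (G : SimpleGraph V) (r : ℕ → V) : Prop :=
  Function.Injective r ∧ ∀ n, G.Adj (r n) (r (n + 1))

/-- Two rays determine the same end iff their images have infinite intersection. -/
def SameEnd (r r' : ℕ → V) : Prop := (Set.range r ∩ Set.range r').Infinite

/-- `H` stabilizes the end of the ray `r`. -/
def StabilizesEnd (G : SimpleGraph V) (H : Subgroup (Equiv.Perm V)) (r : ℕ → V) :
    Prop :=
  ∀ π ∈ H, ∀ r' : ℕ → V, IsRay G r' → SameEnd r' r → SameEnd (π ∘ r') r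

/-- `H` does not stabilize any end of `G`. -/
def NoStabilizedEnd (G : SimpleGraph V) (H : Subgroup (Equiv.Perm V)) : Prop :=
  ¬ ∃ r : ℕ → V, IsRay G r ∧ StabilizesEnd G H r

/-- `H` leaves no nonempty proper subtree of `G` invariant. -/
def NoInvariantSubtree (G : SimpleGraph V) (H : Subgroup (Equiv.Perm V)) : Prop :=
  ¬ ∃ S : Set V, S.Nonempty ∧ S ≠ Set.univ ∧ GeodClosed G S ∧
    ∀ π ∈ H, π '' S = S

/-- A path in the tree: a nonempty geodesically closed set in which every vertex
has at most two neighbors inside the set. -/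
def IsPathSet (G : SimpleGraph V) (C : Set V) : Prop :=
  C.Nonempty ∧ GeodClosed G C ∧
    ∀ v ∈ C, ∀ a ∈ C, ∀ b ∈ C, ∀ c ∈ C,
      G.Adj v a → G.Adj v b → G.Adj v c → a = b ∨ a = c ∨ b = c

/-- `p` is a nearest-point projection onto `C`. -/
def IsProj (G : SimpleGraph V) (C : Set V) (p : V → V) : Prop :=
  ∀ x, p x ∈ C ∧ ∀ c ∈ C, G.dist x (p x) ≤ G.dist x c

/-- Tits' independence property `(P)` for `H ≤ Aut(G)`: for every path `C` with
nearest-point projection `p`, and every family of elements of the pointwise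
stabilizer of `C`, there is a unique element of that stabilizer agreeing with
the `s`-th member of the family on the fiber `p⁻¹(s)`, for every `s ∈ C`. -/
def PropertyP (G : SimpleGraph V) (H : Subgroup (Equiv.Perm V)) : Prop :=
  ∀ C : Set V, IsPathSet G C → ∀ p : V → V, IsProj G C p →
    ∀ gs : V → Equiv.Perm V,
      (∀ s ∈ C, gs s ∈ H ∧ ∀ c ∈ C, gs s c = c) →
      ∃! g : Equiv.Perm V, g ∈ H ∧ (∀ c ∈ C, g c = c) ∧
        ∀ s ∈ C, ∀ x, p x = s → g x = gs s x

/-- A group is `N`-boundedly simple if every nontrivial element is a product of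
at most `N` conjugates of `g` or of `g⁻¹`, for every nontrivial `g`. -/
def IsNBoundedlySimple (Γ : Type*) [Group Γ] (N : ℕ) : Prop :=
  ∀ g h : Γ, g ≠ 1 → h ≠ 1 →
    ∃ l : List Γ, l.length ≤ N ∧
      (∀ x ∈ l, ∃ c : Γ, x = c * g * c⁻¹ ∨ x = c * g⁻¹ * c⁻¹) ∧ l.prod = h

/-- A group is boundedly simple if it is `N`-boundedly simple for some `N`. -/
def IsBoundedlySimple (Γ : Type*) [Group Γ] : Prop :=
  ∃ N : ℕ, IsNBoundedlySimple Γ N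

/-- The conjugacy class of `g` under conjugation by elements of `H`. -/
def conjClassIn {Γ : Type*} [Group Γ] (H : Subgroup Γ) (g : Γ) : Set Γ :=
  {k | ∃ c ∈ H, k = c * g * c⁻¹}

/-- A ramification point: a vertex with at least three neighbors. -/
def IsRamification (G : SimpleGraph V) (r : V) : Prop :=
  ∃ a b c, a ≠ b ∧ a ≠ c ∧ b ≠ c ∧ G.Adj r a ∧ G.Adj r b ∧ G.Adj r c

/-- An `(n,m)`-biregular tree: a proper 2-coloring where every vertex of the
first color has exactly `n` neighbors and every vertex of the second has `m`. -/
def IsBiregular (G : SimpleGraph V) (n m : Cardinal.{u}) : Prop :=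
  ∃ c : V → Bool, (∀ x y, G.Adj x y → c x ≠ c y) ∧
    (∀ v, c v = false → Cardinal.mk (G.neighborSet v) = n) ∧
    (∀ v, c v = true → Cardinal.mk (G.neighborSet v) = m)

/-- An almost `(n,m)`-regular tree: a subdivision of the `(n,m)`-biregular tree,
described by a coloring `g : V → {0,…,k}`. -/
def IsAlmostBiregular (G : SimpleGraph V) (n m : Cardinal.{u}) : Prop :=
  ∃ k : ℕ, 1 ≤ k ∧ ∃ g : V → ℕ, (∀ v, g v ≤ k) ∧
    (∀ v, g v = 0 → (∀ w, G.Adj v w → g w = 1) ∧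
      Cardinal.mk (G.neighborSet v) = n) ∧
    (∀ v, g v = k → (∀ w, G.Adj v w → g w = k - 1) ∧
      Cardinal.mk (G.neighborSet v) = m) ∧
    (∀ v, 0 < g v → g v < k → ∃ a b, a ≠ b ∧ G.Adj v a ∧ G.Adj v b ∧
      g a = g v - 1 ∧ g b = g v + 1 ∧ ∀ w, G.Adj v w → w = a ∨ w = b)

/-- The axis of a translation: vertices of minimal displacement. -/
def axisSet (G : SimpleGraph V) (π : Equiv.Perm V) : Set V :=
  {v | ∀ w, G.dist v (π v) ≤ G.dist w (π w)}


/-! ### Geodesics in a tree -/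

/-- In a tree, the neighbor of `v` that is closer to `r` is unique. -/
lemma closer_unique {G : SimpleGraph V} (hG : G.IsTree) {r v a b : V}
    (ha : G.Adj v a) (hb : G.Adj v b) (hda : G.dist r a + 1 = G.dist r v)
    (hdb : G.dist r b + 1 = G.dist r v) : a = b := by
  obtain ⟨p, hp⟩ := hG.connected.exists_walk_length_eq_dist a r
  obtain ⟨q, hq⟩ := hG.connected.exists_walk_length_eq_dist b r
  have hp' : (SimpleGraph.Walk.cons ha p).IsPath := by
    apply SimpleGraph.Walk.isPath_of_length_eq_dist
    rw [SimpleGraph.Walk.length_cons, hp, G.dist_comm (u := a), G.dist_comm (u := v), hda]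
  have hq' : (SimpleGraph.Walk.cons hb q).IsPath := by
    apply SimpleGraph.Walk.isPath_of_length_eq_dist
    rw [SimpleGraph.Walk.length_cons, hq, G.dist_comm (u := b), G.dist_comm (u := v), hdb]
  have h := (hG.existsUnique_path v r).unique hp' hq'
  have h2 := congrArg SimpleGraph.Walk.snd h
  simpa using h2

lemma exists_closer {G : SimpleGraph V} (hG : G.IsTree) {r v : V} (h : v ≠ r) :
    ∃ a, G.Adj v a ∧ G.dist r a + 1 = G.dist r v := by
  obtain ⟨p, hp⟩ := hG.connected.exists_walk_length_eq_dist v r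
  cases p with
  | nil => exact absurd rfl h
  | @cons _ a _ ha p =>
    refine ⟨a, ha, ?_⟩
    have h1 := G.dist_le p
    have h2 := hG.dist_eq_dist_add_one_of_adj r ha
    rw [SimpleGraph.Walk.length_cons] at hp
    rw [G.dist_comm (u := a)] at h1
    rw [G.dist_comm (u := v)] at hp
    omega

/-- The geodesic from `x` to `y` has a point at every prescribed distance `j ≤ dist x y` from `x`. -/
lemma exists_on_geodesic {G : SimpleGraph V} (hG : G.IsTree) (x y : V) (j k : ℕ)
    (h : G.dist x y = j + k) : ∃ z, G.dist x z = j ∧ G.dist z y = k := by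
  induction k generalizing y with
  | zero => exact ⟨y, h, by simp⟩
  | succ k ih =>
    have hne : y ≠ x := by
      rintro rfl
      simp at h
    obtain ⟨a, ha, hd⟩ := exists_closer hG hne
    obtain ⟨z, hz1, hz2⟩ := ih a (by omega)
    refine ⟨z, hz1, ?_⟩
    have h1 := hG.connected.dist_triangle (u := x) (v := z) (w := y)
    have h2 := hG.dist_eq_dist_add_one_of_adj z ha
    omega

lemma IsAut.dist_le {G : SimpleGraph V} (hG : G.IsTree) {π : Equiv.Perm V} (h : IsAut G π)
    (x y : V) : G.dist (π x) (π y) ≤ G.dist x y := by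
  obtain ⟨p, hp⟩ := hG.connected.exists_walk_length_eq_dist x y
  let φ : G →g G := ⟨π, fun {a b} hab => (h a b).2 hab⟩
  have := G.dist_le (p.map φ)
  rw [SimpleGraph.Walk.length_map, hp] at this
  exact this

lemma IsAut.dist_eq {G : SimpleGraph V} (hG : G.IsTree) {π : Equiv.Perm V} (h : IsAut G π)
    (x y : V) : G.dist (π x) (π y) = G.dist x y := by
  apply le_antisymm (h.dist_le hG x y)
  have h' : IsAut G π⁻¹ := (autGroup G).inv_mem (x := π) h
  simpa using h'.dist_le hG (π x) (π y)

/-- A proper 2-coloring of a tree records the parity of the distance. -/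
lemma color_eq_iff {G : SimpleGraph V} (hG : G.IsTree) {c : V → Bool}
    (hc : ∀ x y, G.Adj x y → c x ≠ c y) (x y : V) : c x = c y ↔ Even (G.dist x y) := by
  induction h : G.dist x y generalizing y with
  | zero =>
    rw [hG.connected.dist_eq_zero_iff] at h
    simp [h]
  | succ k ih =>
    have hne : y ≠ x := by
      rintro rfl
      simp at h
    obtain ⟨a, ha, hd⟩ := exists_closer hG hne
    have h1 := ih a (by omega)
    have h2 := hc y a ha
    rw [Nat.even_add_one, ← h1]
    cases hx : c x <;> cases hy : c y <;> cases hca : c a <;> simp_all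

/-- Elements of `Aut⁺` preserve the two color classes: each generator fixes a vertex, so it
preserves the parity of the distance to that vertex. -/
lemma color_autPlus {G : SimpleGraph V} (hG : G.IsTree) {c : V → Bool}
    (hc : ∀ x y, G.Adj x y → c x ≠ c y) {τ : Equiv.Perm V} (hτ : τ ∈ autPlus G) (x : V) :
    c (τ x) = c x := by
  unfold autPlus plusGroup at hτ
  induction hτ using Subgroup.closure_induction generalizing x with
  | mem π hπ =>
    obtain ⟨ha, v, w, -, hv, -⟩ := hπ
    have h1 := IsAut.dist_eq hG ha v x
    rw [hv] at h1
    have h2 := color_eq_iff hG hc v (π x)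
    have h3 := color_eq_iff hG hc v x
    rw [h1, ← h3] at h2
    cases hx : c x <;> cases hy : c v <;> cases hca : c (π x) <;> simp_all
  | one => rfl
  | mul a b _ _ iha ihb => rw [Equiv.Perm.mul_apply, iha, ihb]
  | inv a _ ih =>
    have := ih (a⁻¹ x)
    simpa using this.symm

/-! ### Automorphisms fixing a root -/

/-- An equivalence can be adjusted by a transposition so that it matches a distinguished point
`P` of the domain (if there is one) with a distinguished point `P'` of the codomain. -/
lemma adjust_equiv {A B : Type*} (e : A ≃ B) (P : A → Prop) (P' : B → Prop)
    (hP : ∀ a b, P a → P b → a = b) (hP' : ∀ a b, P' a → P' b → a = b)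
    (hex : (∃ a, P a) ↔ ∃ b, P' b) :
    ∃ e' : A ≃ B, (∀ a, P a ↔ P' (e' a)) ∧ ∀ a, ¬ P a → ¬ P' (e a) → e' a = e a := by
  classical
  by_cases h : ∃ a, P a
  · obtain ⟨b, hb⟩ := hex.1 h
    obtain ⟨a, ha⟩ := h
    have hab : (e.trans (Equiv.swap (e a) b)) a = b := by simp
    refine ⟨e.trans (Equiv.swap (e a) b), fun z => ⟨fun hz => ?_, fun hz => ?_⟩, fun z hz hz' => ?_⟩
    · rw [hP z a hz ha, hab]
      exact hb
    · have hza : z = a :=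
        (e.trans (Equiv.swap (e a) b)).injective ((hP' _ _ hz hb).trans hab.symm)
      rw [hza]
      exact ha
    · rw [Equiv.trans_apply, Equiv.swap_apply_of_ne_of_ne]
      · intro h
        exact hz (e.injective h ▸ ha)
      · rintro rfl
        exact hz' hb
  · have h' : ¬ ∃ b, P' b := fun h' => h (hex.2 h')
    push Not at h h'
    exact ⟨e, fun a => ⟨fun x => absurd x (h a), fun x => absurd x (h' _)⟩, fun _ _ _ => rfl⟩

/-- `u` and `w` occupy corresponding positions in the tree rooted at `r`, for an automorphism
that is to fix `r` and send `x` to `y`: they have the same depth and color, and `u` lies on the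
geodesic from `r` to `x` exactly when `w` lies on the geodesic from `r` to `y`. -/
def Matched (G : SimpleGraph V) (c : V → Bool) (r x y u w : V) : Prop :=
  G.dist r u = G.dist r w ∧ c u = c w ∧ (OnGeodesic G r x u ↔ OnGeodesic G r y w)

/-- `z` is a child of `u` in the tree rooted at `r`. -/
def IsChild (G : SimpleGraph V) (r u z : V) : Prop :=
  G.Adj u z ∧ G.dist r z = G.dist r u + 1

lemma exists_child_onGeodesic {G : SimpleGraph V} (hG : G.IsTree) (r x u : V) :
    (∃ z, IsChild G r u z ∧ OnGeodesic G r x z) ↔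
      OnGeodesic G r x u ∧ G.dist r u < G.dist r x := by
  unfold OnGeodesic IsChild
  constructor
  · rintro ⟨z, ⟨hz, hd⟩, ho⟩
    have h1 := hG.connected.dist_triangle (u := r) (v := u) (w := x)
    have h2 := hG.dist_eq_dist_add_one_of_adj x hz
    rw [G.dist_comm (u := x), G.dist_comm (u := x)] at h2
    omega
  · rintro ⟨ho, hl⟩
    have hne : u ≠ x := by
      rintro rfl
      exact lt_irrefl _ hl
    obtain ⟨z, hz, hd⟩ := exists_closer hG hne
    have h1 := hG.connected.dist_triangle (u := r) (v := z) (w := x)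
    have h2 := hG.dist_eq_dist_add_one_of_adj r hz
    rw [G.dist_comm (u := x), G.dist_comm (u := x)] at hd
    refine ⟨z, ⟨hz, ?_⟩, ?_⟩ <;> omega

lemma child_onGeodesic_unique {G : SimpleGraph V} (hG : G.IsTree) {r x u a b : V}
    (ha : IsChild G r u a) (hb : IsChild G r u b) (hao : OnGeodesic G r x a)
    (hbo : OnGeodesic G r x b) : a = b := by
  have hu := ((exists_child_onGeodesic hG r x u).1 ⟨a, ha, hao⟩).1
  unfold OnGeodesic at *
  refine closer_unique hG (r := x) ha.1 hb.1 ?_ ?_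
  · have := ha.2
    rw [G.dist_comm (u := x), G.dist_comm (u := x)]
    omega
  · have := hb.2
    rw [G.dist_comm (u := x), G.dist_comm (u := x)]
    omega

/-- The one-step extension: the children of matched vertices correspond bijectively, with
corresponding children matched again. The neighborhoods are equinumerous by biregularity; the
bijection is adjusted so as to match the parents and the next vertices on the two geodesics.
The two inverse bijections are given as total functions. -/
lemma exists_child_matching {G : SimpleGraph V} (hG : G.IsTree) {c : V → Bool}
    (hc : ∀ x y, G.Adj x y → c x ≠ c y)
    (hcard : ∀ u w, c u = c w → Nonempty (G.neighborSet u ≃ G.neighborSet w))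
    {r x y : V} (hxy : G.dist r x = G.dist r y) {u w : V} (h : Matched G c r x y u w) :
    ∃ E E' : V → V,
      (∀ z, IsChild G r u z → IsChild G r w (E z) ∧ Matched G c r x y z (E z) ∧ E' (E z) = z) ∧
      (∀ z, IsChild G r w z →
        IsChild G r u (E' z) ∧ Matched G c r x y (E' z) z ∧ E (E' z) = z) := by
  classical
  obtain ⟨hd, hcol, hon⟩ := h
  obtain ⟨e₀⟩ := hcard u w hcol
  have hpar : ∀ u, (∃ a : G.neighborSet u, G.dist r a + 1 = G.dist r u) ↔ 0 < G.dist r u := by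
    intro u
    constructor
    · rintro ⟨a, ha⟩
      omega
    · intro hu
      have hne : u ≠ r := by
        rintro rfl
        simp at hu
      obtain ⟨a, ha, hda⟩ := exists_closer hG hne
      exact ⟨⟨a, ha⟩, hda⟩
  obtain ⟨e₁, he₁, -⟩ := adjust_equiv e₀ (fun a => G.dist r a + 1 = G.dist r u)
    (fun b => G.dist r b + 1 = G.dist r w)
    (fun a b ha hb => Subtype.ext (closer_unique hG a.2 b.2 ha hb))
    (fun a b ha hb => Subtype.ext (closer_unique hG a.2 b.2 ha hb))
    (by rw [hpar, hpar, hd])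
  have hnext : ∀ x u, (∃ a : G.neighborSet u, IsChild G r u a ∧ OnGeodesic G r x a) ↔
      OnGeodesic G r x u ∧ G.dist r u < G.dist r x := by
    intro x u
    rw [← exists_child_onGeodesic hG]
    exact ⟨fun ⟨a, ha⟩ => ⟨a, ha⟩, fun ⟨a, ha⟩ => ⟨⟨a, ha.1.1⟩, ha⟩⟩
  obtain ⟨e, he, hee⟩ := adjust_equiv e₁ (fun a => IsChild G r u a ∧ OnGeodesic G r x a)
    (fun b => IsChild G r w b ∧ OnGeodesic G r y b)
    (fun a b ha hb => Subtype.ext (child_onGeodesic_unique hG ha.1 hb.1 ha.2 hb.2))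
    (fun a b ha hb => Subtype.ext (child_onGeodesic_unique hG ha.1 hb.1 ha.2 hb.2))
    (by rw [hnext, hnext, hd, hon, hxy])
  -- The second adjustment does not disturb the matching of the parents.
  have hQ : ∀ a : G.neighborSet u,
      G.dist r a + 1 = G.dist r u → G.dist r (e a) + 1 = G.dist r w := by
    intro a ha
    have h1 := (he₁ a).1 ha
    rw [hee a]
    · exact h1
    · rintro ⟨⟨-, h⟩, -⟩
      omega
    · rintro ⟨⟨-, h⟩, -⟩
      omega
  have hQ' : ∀ a : G.neighborSet u,
      G.dist r (e a) + 1 = G.dist r w → G.dist r a + 1 = G.dist r u := by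
    intro a ha
    obtain ⟨b, hb⟩ := (hpar u).2 (by omega)
    have h1 : e a = e b := Subtype.ext (closer_unique hG (e a).2 (e b).2 ha (hQ b hb))
    rw [e.injective h1]
    exact hb
  have key : ∀ a : G.neighborSet u, (IsChild G r u a ↔ IsChild G r w (e a)) ∧
      (IsChild G r u a → Matched G c r x y a (e a)) := by
    intro a
    have h1 := hG.dist_eq_dist_add_one_of_adj r a.2
    have h2 := hG.dist_eq_dist_add_one_of_adj r (e a).2
    have h3 := hQ a
    have h4 := hQ' a
    have hiff : IsChild G r u a ↔ IsChild G r w (e a) := by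
      refine ⟨fun h => ⟨(e a).2, ?_⟩, fun h => ⟨a.2, ?_⟩⟩
      · have := h.2
        omega
      · have := h.2
        omega
    refine ⟨hiff, fun h => ⟨?_, ?_, ?_⟩⟩
    · rw [h.2, (hiff.1 h).2, hd]
    · have h5 := hc _ _ a.2
      have h6 := hc _ _ (e a).2
      revert h5 h6 hcol
      cases c u <;> cases c w <;> cases c a.1 <;> cases c (e a).1 <;> simp
    · have h7 := he a
      have h8 := hiff.1 h
      exact ⟨fun h9 => (h7.1 ⟨h, h9⟩).2, fun h9 => (h7.2 ⟨h8, h9⟩).2⟩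
  refine ⟨fun z => if hz : G.Adj u z then e ⟨z, hz⟩ else z,
    fun z => if hz : G.Adj w z then e.symm ⟨z, hz⟩ else z, fun z hz => ?_, fun z hz => ?_⟩
  · have hk := key ⟨z, hz.1⟩
    have hadj : G.Adj w (e ⟨z, hz.1⟩) := (e ⟨z, hz.1⟩).2
    simp only [hz.1, hadj, dite_true]
    exact ⟨hk.1.1 hz, hk.2 hz, by simp⟩
  · have hk := key (e.symm ⟨z, hz.1⟩)
    have hadj : G.Adj u (e.symm ⟨z, hz.1⟩) := (e.symm ⟨z, hz.1⟩).2
    simp only [hz.1, hadj, dite_true]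
    rw [Equiv.apply_symm_apply] at hk
    exact ⟨hk.1.2 hz, hk.2 (hk.1.2 hz), by simp⟩

/-- The stabilizer of a vertex `r` of a biregular tree is transitive on each sphere around `r`.
The automorphism and its inverse are built level by level from the matchings of children. -/
lemma exists_aut_fixing_root {G : SimpleGraph V} (hG : G.IsTree) {c : V → Bool}
    (hc : ∀ x y, G.Adj x y → c x ≠ c y)
    (hcard : ∀ u w, c u = c w → Nonempty (G.neighborSet u ≃ G.neighborSet w))
    {r x y : V} (hxy : G.dist r x = G.dist r y) :
    ∃ π : Equiv.Perm V, IsAut G π ∧ π r = r ∧ π x = y := by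
  classical
  have hE : ∀ u w, ∃ E E' : V → V, Matched G c r x y u w →
      (∀ z, IsChild G r u z → IsChild G r w (E z) ∧ Matched G c r x y z (E z) ∧ E' (E z) = z) ∧
      (∀ z, IsChild G r w z →
        IsChild G r u (E' z) ∧ Matched G c r x y (E' z) z ∧ E (E' z) = z) := by
    intro u w
    by_cases h : Matched G c r x y u w
    · obtain ⟨E, E', hE⟩ := exists_child_matching hG hc hcard hxy h
      exact ⟨E, E', fun _ => hE⟩
    · exact ⟨id, id, fun h' => absurd h' h⟩
  choose E E' hE using hE
  have hpar : ∀ v, ∃ p, v ≠ r → IsChild G r p v := by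
    intro v
    by_cases h : v = r
    · exact ⟨v, fun h' => absurd h h'⟩
    · obtain ⟨a, ha, hd⟩ := exists_closer hG h
      exact ⟨a, fun _ => ⟨ha.symm, hd.symm⟩⟩
  choose par hpar using hpar
  have par_eq : ∀ {p v}, IsChild G r p v → par v = p := by
    intro p v h
    have hne : v ≠ r := by
      rintro rfl
      have := h.2
      simp at this
    have h' := hpar v hne
    exact closer_unique hG h'.1.symm h.1.symm h'.2.symm h.2.symm
  have hroot : ∀ {v}, G.dist r v = 0 → v = r := fun h =>
    (hG.connected.dist_eq_zero_iff.1 h).symm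
  have hpos : ∀ {v k}, G.dist r v = k + 1 → v ≠ r := by
    rintro v k h rfl
    simp at h
  have mroot : Matched G c r x y r r := by simp [Matched, OnGeodesic]
  -- `f k` and `g k` are the automorphism and its inverse, meaningful on the sphere of radius `k`.
  let f : ℕ → V → V := fun k => Nat.rec (fun _ => r) (fun _ F v => E (par v) (F (par v)) v) k
  let g : ℕ → V → V := fun k => Nat.rec (fun _ => r) (fun _ F v => E' (F (par v)) (par v) v) k
  have hf0 : ∀ v, f 0 v = r := fun _ => rfl
  have hg0 : ∀ v, g 0 v = r := fun _ => rfl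
  have hfs : ∀ k v, f (k + 1) v = E (par v) (f k (par v)) v := fun _ _ => rfl
  have hgs : ∀ k v, g (k + 1) v = E' (g k (par v)) (par v) v := fun _ _ => rfl
  have hf : ∀ k v, G.dist r v = k → Matched G c r x y v (f k v) ∧ g k (f k v) = v := by
    intro k
    induction k with
    | zero =>
      intro v hv
      rw [hroot hv, hf0, hg0]
      exact ⟨mroot, rfl⟩
    | succ k ih =>
      intro v hv
      have hp := hpar v (hpos hv)
      have ih' := ih (par v) (by have := hp.2; omega)
      obtain ⟨h1, h2, h3⟩ := (hE _ _ ih'.1).1 v hp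
      rw [hfs, hgs, par_eq h1, ih'.2]
      exact ⟨h2, h3⟩
  have hg : ∀ k v, G.dist r v = k → Matched G c r x y (g k v) v ∧ f k (g k v) = v := by
    intro k
    induction k with
    | zero =>
      intro v hv
      rw [hroot hv, hf0, hg0]
      exact ⟨mroot, rfl⟩
    | succ k ih =>
      intro v hv
      have hp := hpar v (hpos hv)
      have ih' := ih (par v) (by have := hp.2; omega)
      obtain ⟨h1, h2, h3⟩ := (hE _ _ ih'.1).2 v hp
      rw [hgs, hfs, par_eq h1, ih'.2]
      exact ⟨h2, h3⟩
  have hfchild : ∀ u v, IsChild G r u v →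
      IsChild G r (f (G.dist r u) u) (f (G.dist r v) v) := by
    intro u v h
    rw [h.2, hfs, par_eq h]
    exact ((hE _ _ (hf _ u rfl).1).1 v h).1
  have hgchild : ∀ u v, IsChild G r u v →
      IsChild G r (g (G.dist r u) u) (g (G.dist r v) v) := by
    intro u v h
    rw [h.2, hgs, par_eq h]
    exact ((hE _ _ (hg _ u rfl).1).2 v h).1
  let π : Equiv.Perm V :=
    { toFun := fun v => f (G.dist r v) v
      invFun := fun v => g (G.dist r v) v
      left_inv := fun v => by
        have h := hf _ v rfl
        change g (G.dist r (f (G.dist r v) v)) (f (G.dist r v) v) = v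
        rw [← h.1.1, h.2]
      right_inv := fun v => by
        have h := hg _ v rfl
        change f (G.dist r (g (G.dist r v) v)) (g (G.dist r v) v) = v
        rw [h.1.1, h.2] }
  have hadj : ∀ a b, G.Adj a b → G.Adj (π a) (π b) := by
    intro a b hab
    rcases hG.dist_eq_dist_add_one_of_adj r hab with h | h
    · exact (hfchild b a ⟨hab.symm, h⟩).1.symm
    · exact (hfchild a b ⟨hab, h⟩).1
  have hadj' : ∀ a b, G.Adj a b → G.Adj (π.symm a) (π.symm b) := by
    intro a b hab
    rcases hG.dist_eq_dist_add_one_of_adj r hab with h | h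
    · exact (hgchild b a ⟨hab.symm, h⟩).1.symm
    · exact (hgchild a b ⟨hab, h⟩).1
  refine ⟨π, fun a b => ⟨fun h => ?_, hadj a b⟩, ?_, ?_⟩
  · simpa using hadj' _ _ h
  · change f (G.dist r r) r = r
    rw [SimpleGraph.dist_self, hf0]
  · -- The image of `x` lies on the geodesic from `r` to `y`, at the depth of `y`.
    have h : Matched G c r x y x (π x) := (hf _ x rfl).1
    have h1 : OnGeodesic G r y (π x) := h.2.2.1 (by simp [OnGeodesic])
    have h2 := h.1
    unfold OnGeodesic at h1
    exact hG.connected.dist_eq_zero_iff.1 (by omega)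


/-- in an `(n,m)`-biregular tree (`n, m ≥ 3`), every translation
in `Aut⁺(A)` is a composition of two rotations in `Aut⁺(A)`. -/
theorem translation_eq_two_rotations (G : SimpleGraph V) (hG : G.IsTree)
    (n m : Cardinal.{u}) (hn : 3 ≤ n) (hm : 3 ≤ m) (hbi : IsBiregular G n m)
    (τ : Equiv.Perm V) (hτ : τ ∈ autPlus G) (htr : IsTranslation G τ) :
    ∃ ρ₁ ρ₂ : Equiv.Perm V, ρ₁ ∈ autPlus G ∧ ρ₂ ∈ autPlus G ∧
      IsRotation ρ₁ ∧ IsRotation ρ₂ ∧ τ = ρ₁ * ρ₂ := by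
  obtain ⟨c, hc, hcn, hcm⟩ := hbi
  have hcard : ∀ u w, c u = c w → Nonempty (G.neighborSet u ≃ G.neighborSet w) := by
    intro u w h
    rw [← Cardinal.eq]
    cases hw : c w
    · rw [hcn u (h.trans hw), hcn w hw]
    · rw [hcm u (h.trans hw), hcm w hw]
  have hthree : ∀ v, 3 ≤ Cardinal.mk (G.neighborSet v) := by
    intro v
    cases hv : c v
    · rw [hcn v hv]
      exact hn
    · rw [hcm v hv]
      exact hm
  obtain ⟨x⟩ := hG.connected.nonempty
  have hev := (color_eq_iff hG hc x (τ x)).1 (color_autPlus hG hc hτ x).symm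
  obtain ⟨k, hk⟩ := hev
  have hne : τ x ≠ x := fun h => htr.1 ⟨x, h⟩
  have hkpos : 0 < k := by
    have := hG.connected.pos_dist_of_ne hne.symm
    omega
  obtain ⟨v, hxv, hvy⟩ := exists_on_geodesic hG x (τ x) k k hk
  rw [G.dist_comm] at hvy
  have hvx : v ≠ x := by
    rintro rfl
    simp at hxv
    omega
  have hvy' : v ≠ τ x := by
    rintro rfl
    simp at hvy
    omega
  -- A third neighbor `b` of the midpoint, pointing away from both `x` and `τ x`.
  obtain ⟨a₁, ha₁, hd₁⟩ := exists_closer hG hvx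
  obtain ⟨a₂, ha₂, hd₂⟩ := exists_closer hG hvy'
  obtain ⟨⟨b, hb⟩, hb₁, hb₂⟩ := Cardinal.exists_ne_ne_of_three_le (hthree v) ⟨a₁, ha₁⟩ ⟨a₂, ha₂⟩
  have hvb : G.Adj v b := hb
  have hbx : G.dist x b = G.dist x v + 1 := by
    rcases hG.dist_eq_dist_add_one_of_adj x hvb with h | h
    · exact absurd (Subtype.ext (closer_unique hG hvb ha₁ h.symm hd₁)) hb₁
    · exact h
  have hby : G.dist (τ x) b = G.dist (τ x) v + 1 := by
    rcases hG.dist_eq_dist_add_one_of_adj (τ x) hvb with h | h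
    · exact absurd (Subtype.ext (closer_unique hG hvb ha₂ h.symm hd₂)) hb₂
    · exact h
  obtain ⟨ρ, hρ, hρb, hρx⟩ := exists_aut_fixing_root hG hc hcard (r := b) (x := x) (y := τ x)
    (by rw [G.dist_comm (u := b), G.dist_comm (u := b)]; omega)
  -- `v` is the neighbor of `b` closest to `x`, and also the one closest to `τ x = ρ x`.
  have hρv : ρ v = v := by
    refine closer_unique hG (r := τ x) (v := b) ?_ hvb.symm ?_ hby.symm
    · have := (hρ b v).2 hvb.symm
      rwa [hρb] at this
    · have := hρ.dist_eq hG x v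
      rw [hρx] at this
      omega
  have hρmem : ρ ∈ autPlus G := Subgroup.subset_closure ⟨hρ, v, b, hvb, hρv, hρb⟩
  refine ⟨ρ, ρ⁻¹ * τ, hρmem, mul_mem (inv_mem hρmem) hτ, ⟨v, hρv⟩, ⟨x, ?_⟩, by simp⟩
  simp [Equiv.Perm.mul_apply, ← hρx]

end BSTrees
end

section
/- Let (A, f) be a colored tree such that Aut_f⁺(A) is nontrivial and boundedly simple. Let α, β ∈ Aut_f⁺(A) be rotations and x, y, z three distinct ramification points such that: α(x) = x, β(y) = y, on the geodesic from x to y the only vertex fixed by α is x and the only vertex fixed by β is y (so that β∘α is a translation along a doubly infinite path C, its axis); z does not lie on C; t is the nearest-point projection of z onto C; s is the neighbor of z on the geodesic from z to t; and no vertex of color f(z) lies on the geodesic from x to y nor on the geodesic from s to t. Then every γ ∈ Aut_f⁺(A) with γ(z) = z satisfies γ(s) = s. -/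
/-!
Write `H = Aut_f⁺(A)`, `τ = β α`, and call the vertices of color `f z` marked. Suppose that some
`γ ∈ H` fixes `z` and moves `s`; a counting invariant then contradicts bounded simplicity.

*The invariant.* Along the geodesic from `u` to `v`, record for each `k` the parity of the number of
pairs of consecutive marked vertices at distance `k` (`gap`). This vector over `ZMod 2` is symmetric
in `u, v` and `H`-invariant. Since geodesic triangles are tripods, the three vectors of a triangle
add up to a vector of Hamming weight at most 3: each leg is counted twice, and only the gaps
straddling the center survive (`wt_gap_triangle_le`). Hence `g ↦ gap z (g z)` is a homomorphism up
to weight 3, and the contributions of `c` and `c⁻¹` to `c g c⁻¹` cancel, so products of at most `N`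
conjugates of a fixed `g` or `g⁻¹` have bounded weight (`wt_gap_prod_le`). Under bounded simplicity
the weight is therefore bounded on all of `H` (`exists_wt_gap_bound`).

*Elements of large weight.* For `n ≥ 1` the geodesic from `z` to `τⁿ z` runs
`z → s → t → τⁿ t → τⁿ s → τⁿ z` and has length `2 dist z t + n dist t (τ t)`
(`onGeodesic_via_axis`). Only its ends are marked: the axis is covered by `H`-translates of the
geodesic from `x` to `y`, because long segments `[x, τᵐ x]` follow the axis away from their ends
(`exists_pow_onGeodesic`), and they are covered by translates of `[x, y]` and `β [x, y]`. As `γ`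
fixes `z` and moves `s`, these segments concatenate without backtracking, so the geodesic from `z`
to `τ γ τ² γ ⋯ τⁿ γ z` has `n` gaps of pairwise distinct lengths and its weight is `n`
(`gap_longElt`, `wt_sum_single`), which is unbounded.
-/

open Pointwise

namespace BSTrees

universe u

variable {V : Type u} {I : Type*}

/-! ### Geodesics in trees -/

section Geodesics

variable {G : SimpleGraph V}

lemma OnGeodesic.symm {a b w : V} (h : OnGeodesic G a b w) : OnGeodesic G b a w := by
  unfold OnGeodesic at *
  rw [G.dist_comm (u := b) (v := w), G.dist_comm (u := w) (v := a), G.dist_comm (u := b) (v := a)]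
  omega

lemma onGeodesic_left (a b : V) : OnGeodesic G a b a := by simp [OnGeodesic]

lemma onGeodesic_right (a b : V) : OnGeodesic G a b b := by simp [OnGeodesic]

lemma length_eq_dist (hG : G.IsTree) {a b : V} {p : G.Walk a b} (hp : p.IsPath) :
    p.length = G.dist a b := by
  obtain ⟨q, hq, hql⟩ := hG.1.exists_path_of_dist a b
  rw [(hG.existsUnique_path a b).unique hp hq, hql]

lemma mem_support_iff_onGeodesic (hG : G.IsTree) {a b w : V} {p : G.Walk a b} (hp : p.IsPath) :
    w ∈ p.support ↔ OnGeodesic G a b w := by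
  classical
  constructor
  · intro hw
    have h := congrArg SimpleGraph.Walk.length (p.take_spec hw)
    rw [SimpleGraph.Walk.length_append, length_eq_dist hG hp,
      length_eq_dist hG (hp.takeUntil hw), length_eq_dist hG (hp.dropUntil hw)] at h
    exact h
  · intro hw
    obtain ⟨q, hq⟩ := hG.1.exists_walk_length_eq_dist a w
    obtain ⟨r, hr⟩ := hG.1.exists_walk_length_eq_dist w b
    have hqr : (q.append r).IsPath := by
      apply SimpleGraph.Walk.isPath_of_length_eq_dist
      rw [SimpleGraph.Walk.length_append, hq, hr]
      exact hw
    rw [(hG.existsUnique_path a b).unique hp hqr, SimpleGraph.Walk.mem_support_append_iff]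
    left
    simp

/-- Geodesic triangles in a tree are `0`-thin: a side is covered by the other two. -/
lemma OnGeodesic.thin (hG : G.IsTree) {a b w : V} (h : OnGeodesic G a b w) (c : V) :
    OnGeodesic G a c w ∨ OnGeodesic G c b w := by
  classical
  obtain ⟨p, hp, -⟩ := hG.1.exists_path_of_dist a b
  obtain ⟨q, hq, -⟩ := hG.1.exists_path_of_dist a c
  obtain ⟨r, hr, -⟩ := hG.1.exists_path_of_dist c b
  rw [← mem_support_iff_onGeodesic hG hq, ← mem_support_iff_onGeodesic hG hr,
    ← SimpleGraph.Walk.mem_support_append_iff]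
  apply (q.append r).support_bypass_subset_support
  rw [(hG.existsUnique_path a b).unique (q.append r).bypass_isPath hp]
  exact (mem_support_iff_onGeodesic hG hp).2 h

lemma eq_of_dist_eq_zero (hG : G.IsTree) {a b : V} (h : G.dist a b = 0) : a = b :=
  hG.1.dist_eq_zero_iff.1 h

lemma exists_adj_onGeodesic (hG : G.IsTree) {a b : V} (h : a ≠ b) :
    ∃ c, G.Adj a c ∧ OnGeodesic G a b c := by
  obtain ⟨p, hp, hpl⟩ := hG.1.exists_path_of_dist a b
  cases p with
  | nil => exact absurd rfl h
  | cons hadj q =>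
    exact ⟨_, hadj, (mem_support_iff_onGeodesic hG hp).1 (by simp)⟩

/-- A vertex `m` common to `[u, v]` and `[u, w]` that is not yet a median can be moved one step
towards `v` along `[u, v]` while staying on `[u, w]`. -/
lemma exists_median_aux (hG : G.IsTree) (u v w : V) :
    ∀ n m, G.dist m v = n → OnGeodesic G u v m → OnGeodesic G u w m →
      ∃ m, OnGeodesic G u v m ∧ OnGeodesic G v w m ∧ OnGeodesic G u w m := by
  intro n
  induction n with
  | zero =>
    intro m hm h1 h2
    obtain rfl := eq_of_dist_eq_zero hG hm
    exact ⟨m, h1, onGeodesic_left _ _, h2⟩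
  | succ n ih =>
    intro m hm h1 h2
    have hne : m ≠ v := by
      rintro rfl
      simp at hm
    obtain ⟨c, hmc, hc⟩ := exists_adj_onGeodesic hG hne
    have d1 : G.dist m c = 1 := SimpleGraph.dist_eq_one_iff_adj.2 hmc
    have hc' := hc
    unfold OnGeodesic at hc' h1 h2
    have t1 := hG.1.dist_triangle (u := u) (v := m) (w := c)
    have t2 := hG.1.dist_triangle (u := u) (v := c) (w := v)
    have huc : OnGeodesic G u v c := by unfold OnGeodesic; omega
    have s1 := G.dist_comm (u := w) (v := m)
    have s2 := G.dist_comm (u := w) (v := c)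
    rcases hG.dist_eq_dist_add_one_of_adj w hmc with h | h
    · refine ih c (by omega) huc ?_
      unfold OnGeodesic
      have t3 := hG.1.dist_triangle (u := u) (v := c) (w := w)
      omega
    · rcases huc.thin hG w with h3 | h3
      · unfold OnGeodesic at h3 huc
        omega
      · refine ⟨m, h1, OnGeodesic.symm ?_, h2⟩
        unfold OnGeodesic at h3 huc ⊢
        omega

lemma exists_median (hG : G.IsTree) (u v w : V) :
    ∃ m, OnGeodesic G u v m ∧ OnGeodesic G v w m ∧ OnGeodesic G u w m :=
  exists_median_aux hG u v w _ u rfl (onGeodesic_left _ _) (onGeodesic_left _ _)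

/-- Two geodesics that overlap in a nondegenerate segment concatenate to a geodesic. -/
lemma OnGeodesic.concat (hG : G.IsTree) {a b c d : V} (h1 : OnGeodesic G a c b)
    (h2 : OnGeodesic G b d c) (hbc : b ≠ c) : OnGeodesic G a d c := by
  rcases h2.thin hG a with h | h
  · have hpos := hG.1.pos_dist_of_ne hbc
    unfold OnGeodesic at *
    have s1 := G.dist_comm (u := b) (v := a)
    have s2 := G.dist_comm (u := c) (v := a)
    omega
  · exact h

/-- A path in a tree that does not backtrack at `b` is a geodesic through `b`. -/
lemma onGeodesic_of_adj_ne (hG : G.IsTree) {a b c a₁ c₁ : V} (ha : G.Adj b a₁) (hc : G.Adj b c₁)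
    (hne : a₁ ≠ c₁) (h1 : OnGeodesic G a b a₁) (h2 : OnGeodesic G b c c₁) :
    OnGeodesic G a c b := by
  have d1 : G.dist b a₁ = 1 := SimpleGraph.dist_eq_one_iff_adj.2 ha
  have d2 : G.dist b c₁ = 1 := SimpleGraph.dist_eq_one_iff_adj.2 hc
  have d1' := G.dist_comm (u := b) (v := a₁)
  have hmid : OnGeodesic G a₁ c₁ b := by
    have hnadj : ¬ G.Adj a₁ c₁ := fun h => hG.dist_ne_of_adj b h (d1.trans d2.symm)
    have := hG.1.one_lt_dist_of_ne_of_not_adj hne hnadj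
    have t := hG.1.dist_triangle (u := a₁) (v := b) (w := c₁)
    unfold OnGeodesic
    omega
  have h3 : OnGeodesic G a c₁ b := h1.concat hG hmid ha.ne'
  have h4 : OnGeodesic G a c c₁ := h3.concat hG h2 hc.ne
  unfold OnGeodesic at *
  have t := hG.1.dist_triangle (u := a) (v := b) (w := c)
  have t' := hG.1.dist_triangle (u := b) (v := c₁) (w := c)
  omega

end Geodesics

/-! ### Isometries and the axis of a translation -/

section Automorphisms

variable {G : SimpleGraph V}

lemma perm_apply_inv (g : Equiv.Perm V) (v : V) : g (g⁻¹ v) = v := g.apply_symm_apply v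

lemma dist_le_of_isAut (hG : G.IsTree) {g : Equiv.Perm V} (hg : IsAut G g) (a b : V) :
    G.dist (g a) (g b) ≤ G.dist a b := by
  obtain ⟨p, hp⟩ := hG.1.exists_walk_length_eq_dist a b
  let φ : G →g G := ⟨g, fun {x y} h => (hg x y).2 h⟩
  have := SimpleGraph.dist_le (p.map φ)
  rw [SimpleGraph.Walk.length_map, hp] at this
  exact this

lemma dist_apply (hG : G.IsTree) {g : Equiv.Perm V} (hg : g ∈ autGroup G) (a b : V) :
    G.dist (g a) (g b) = G.dist a b := by
  apply le_antisymm (dist_le_of_isAut hG hg a b)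
  have := dist_le_of_isAut hG (inv_mem hg) (g a) (g b)
  simpa using this

lemma onGeodesic_apply (hG : G.IsTree) {g : Equiv.Perm V} (hg : g ∈ autGroup G) {a b w : V} :
    OnGeodesic G (g a) (g b) (g w) ↔ OnGeodesic G a b w := by
  simp [OnGeodesic, dist_apply hG hg]

lemma autfPlus_le_autf (G : SimpleGraph V) (f : V → I) : autfPlus G f ≤ autf G f :=
  (Subgroup.closure_le _).2 fun _ h => h.1

lemma autf_le_autGroup (G : SimpleGraph V) (f : V → I) : autf G f ≤ autGroup G :=
  fun _ h => h.1

end Automorphisms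

section Axis

variable {G : SimpleGraph V} {τ : Equiv.Perm V} {t : V}

/-- If the neighbours of `τ t` towards `t` and towards `τ (τ t)` coincided, the first step from `t`
towards `τ t` would lead to a vertex of smaller displacement, or `τ` would invert an edge. -/
lemma translation_step (hG : G.IsTree) (hτ : τ ∈ autGroup G) (htr : IsTranslation G τ)
    (ht : t ∈ axisSet G τ) : OnGeodesic G t (τ (τ t)) (τ t) := by
  have hne : t ≠ τ t := fun h => htr.1 ⟨t, h.symm⟩
  obtain ⟨b, hb, hb'⟩ := exists_adj_onGeodesic hG hne
  obtain ⟨a, ha, ha'⟩ := exists_adj_onGeodesic hG hne.symm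
  by_cases hab : a = τ b
  · exfalso
    subst hab
    have d1 : G.dist t b = 1 := SimpleGraph.dist_eq_one_iff_adj.2 hb
    have d2 : G.dist (τ t) (τ b) = 1 := SimpleGraph.dist_eq_one_iff_adj.2 ha
    have hmin := ht b
    have s1 := G.dist_comm (u := τ t) (v := t)
    have s2 := G.dist_comm (u := τ b) (v := t)
    have s3 := G.dist_comm (u := τ t) (v := τ b)
    have hthin := ha'.symm.thin hG b
    unfold OnGeodesic at hb' ha'
    rcases hthin with h | h
    -- `τ b` lies on the edge from `t` to `b`, so it equals `t` or `b`
    · unfold OnGeodesic at h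
      by_cases h0 : G.dist t (τ b) = 0
      · have e1 := eq_of_dist_eq_zero hG h0
        have e2 : τ t = b := by
          refine (eq_of_dist_eq_zero hG (a := b) (b := τ t) ?_).symm
          omega
        exact htr.2 ⟨t, b, hb, e2, e1.symm⟩
      · have e1 := eq_of_dist_eq_zero hG (a := τ b) (b := b) (by omega)
        exact htr.1 ⟨b, e1⟩
    · unfold OnGeodesic at h
      omega
  · have d := (onGeodesic_apply hG hτ).2 hb'
    exact onGeodesic_of_adj_ne hG ha ((hτ _ _).2 hb) hab (OnGeodesic.symm ha') d

lemma dist_pow_apply (hG : G.IsTree) (hτ : τ ∈ autGroup G) (htr : IsTranslation G τ)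
    (ht : t ∈ axisSet G τ) (n : ℕ) :
    OnGeodesic G t ((τ ^ (n + 1)) t) ((τ ^ n) t) ∧
      G.dist t ((τ ^ n) t) = n * G.dist t (τ t) := by
  induction n with
  | zero => simp [onGeodesic_left]
  | succ n ih =>
    have e1 : (τ ^ (n + 1)) t = (τ ^ n) (τ t) := by rw [pow_succ]; rfl
    have e2 : (τ ^ (n + 2)) t = (τ ^ n) (τ (τ t)) := by rw [pow_add, pow_two]; rfl
    have hn := pow_mem hτ n
    have hne : t ≠ τ t := fun h => htr.1 ⟨t, h.symm⟩
    have hst := (onGeodesic_apply hG hn).2 (translation_step hG hτ htr ht)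
    refine ⟨?_, ?_⟩
    · rw [e2, e1]
      refine OnGeodesic.concat hG ?_ hst ?_
      · rw [← e1]; exact ih.1
      · exact fun h => hne ((τ ^ n).injective h)
    · have h := ih.1
      unfold OnGeodesic at h
      rw [← h, ih.2, e1, dist_apply hG hn]
      ring

/-- A segment from `t` to `τ ^ n t` is covered by translates of the segment from `t` to `τ t`. -/
lemma cover_of_onGeodesic_pow (hG : G.IsTree) (hτ : τ ∈ autGroup G) {n : ℕ} {w : V}
    (hw : OnGeodesic G t ((τ ^ n) t) w) :
    w = t ∨ ∃ i, ∃ v, OnGeodesic G t (τ t) v ∧ w = (τ ^ i) v := by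
  induction n with
  | zero =>
    left
    simp only [OnGeodesic, pow_zero, Equiv.Perm.coe_one, id_eq, SimpleGraph.dist_self] at hw
    exact eq_of_dist_eq_zero hG (by omega)
  | succ n ih =>
    rcases hw.thin hG ((τ ^ n) t) with h | h
    · exact ih h
    · right
      obtain ⟨v, rfl⟩ := (τ ^ n).surjective w
      refine ⟨n, v, ?_, rfl⟩
      rw [pow_succ, Equiv.Perm.mul_apply] at h
      exact (onGeodesic_apply hG (pow_mem hτ n)).1 h

lemma mem_axisSet_of_onGeodesic (hG : G.IsTree) (hτ : τ ∈ autGroup G)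
    (ht : t ∈ axisSet G τ) {n : ℕ} {w : V} (hw : OnGeodesic G t ((τ ^ n) t) w) :
    w ∈ axisSet G τ := by
  rcases cover_of_onGeodesic_pow hG hτ hw with rfl | ⟨i, v, hv, rfl⟩
  · exact ht
  · intro u
    have e : τ ((τ ^ i) v) = (τ ^ i) (τ v) := by
      rw [← Equiv.Perm.mul_apply, ← Equiv.Perm.mul_apply, ← pow_succ, ← pow_succ']
    rw [e, dist_apply hG (pow_mem hτ i)]
    refine le_trans ?_ (ht u)
    have t1 := hG.1.dist_triangle (u := v) (v := τ t) (w := τ v)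
    rw [dist_apply hG hτ] at t1
    unfold OnGeodesic at hv
    omega

/-- If `t` is the projection of `z` to the axis, then `z → t → τ ^ n t → τ ^ n z` is geodesic. -/
lemma onGeodesic_via_axis (hG : G.IsTree) (hτ : τ ∈ autGroup G) (htr : IsTranslation G τ)
    (ht : t ∈ axisSet G τ) {z : V} (hproj : ∀ c ∈ axisSet G τ, G.dist z t ≤ G.dist z c)
    {n : ℕ} (hn : n ≠ 0) :
    OnGeodesic G z ((τ ^ n) z) t ∧ OnGeodesic G z ((τ ^ n) z) ((τ ^ n) t) ∧
      G.dist z ((τ ^ n) z) = 2 * G.dist z t + n * G.dist t (τ t) := by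
  have hne : t ≠ τ t := fun h => htr.1 ⟨t, h.symm⟩
  have hpos := hG.1.pos_dist_of_ne hne
  have hd := (dist_pow_apply hG hτ htr ht n).2
  have hτn := pow_mem hτ n
  have hne' : t ≠ (τ ^ n) t := by
    intro h
    rw [← h, SimpleGraph.dist_self] at hd
    rcases mul_eq_zero.1 hd.symm with h | h <;> omega
  have key : ∀ c m, OnGeodesic G z t m → OnGeodesic G z c m → m ∈ axisSet G τ →
      OnGeodesic G z c t := by
    intro c m h1 h2 h3
    have := hproj m h3
    have h1' := h1
    unfold OnGeodesic at h1'
    have e := eq_of_dist_eq_zero hG (a := m) (b := t) (by omega)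
    rwa [← e]
  have h1 : OnGeodesic G z ((τ ^ n) t) t := by
    obtain ⟨m, m1, m2, m3⟩ := exists_median hG z t ((τ ^ n) t)
    exact key _ m m1 m3 (mem_axisSet_of_onGeodesic hG hτ ht m2)
  have h2 : OnGeodesic G t ((τ ^ n) z) ((τ ^ n) t) := by
    obtain ⟨t', ht'⟩ := (τ ^ n).surjective t
    have h : OnGeodesic G z t' t := by
      obtain ⟨m, m1, m2, m3⟩ := exists_median hG z t t'
      refine key _ m m1 m3 ?_
      have := (onGeodesic_apply hG hτn).2 m2
      rw [ht'] at this
      have hm := mem_axisSet_of_onGeodesic hG hτ ht this.symm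
      intro u
      have e : τ ((τ ^ n) m) = (τ ^ n) (τ m) := by
        rw [← Equiv.Perm.mul_apply, ← Equiv.Perm.mul_apply, ← pow_succ, ← pow_succ']
      have := hm u
      rwa [e, dist_apply hG hτn] at this
    have := (onGeodesic_apply hG hτn).2 h
    rw [ht'] at this
    exact this.symm
  have h3 := h1.concat hG h2 hne'
  have h4 := h2.symm.concat hG h1.symm hne'.symm
  refine ⟨h4.symm, h3, ?_⟩
  unfold OnGeodesic at h1 h3
  rw [← h3, ← h1, hd, dist_apply hG hτn, G.dist_comm (u := t) (v := z)]
  ring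

/-- Every vertex of an axis segment has a translate on a long segment from `x` to `τ ^ m x`, for
an arbitrary vertex `x`: far from its ends, such a segment follows the axis. -/
lemma exists_pow_onGeodesic (hG : G.IsTree) (hτ : τ ∈ autGroup G) (htr : IsTranslation G τ)
    (ht : t ∈ axisSet G τ) (x : V) {n : ℕ} {w : V} (hw : OnGeodesic G t ((τ ^ n) t) w) :
    ∃ k m, OnGeodesic G x ((τ ^ m) x) ((τ ^ k) w) := by
  have hne : t ≠ τ t := fun h => htr.1 ⟨t, h.symm⟩
  have hpos := hG.1.pos_dist_of_ne hne
  obtain ⟨k, hk⟩ : ∃ k, k = G.dist x t + 1 := ⟨_, rfl⟩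
  refine ⟨k, k + n + k, ?_⟩
  have hd := fun i => (dist_pow_apply hG hτ htr ht i).2
  have hw' := hw
  unfold OnGeodesic at hw'
  rw [hd] at hw'
  have e1 : G.dist ((τ ^ k) t) ((τ ^ k) w) = G.dist t w := dist_apply hG (pow_mem hτ k) _ _
  have e2 : G.dist ((τ ^ k) w) ((τ ^ (k + n)) t) = G.dist w ((τ ^ n) t) := by
    rw [pow_add]
    exact dist_apply hG (pow_mem hτ k) _ _
  have e3 : G.dist ((τ ^ (k + n)) t) ((τ ^ (k + n + k)) t) = k * G.dist t (τ t) := by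
    rw [pow_add _ (k + n), ← hd k]
    exact dist_apply hG (pow_mem hτ (k + n)) _ _
  have e4 : G.dist ((τ ^ (k + n + k)) t) ((τ ^ (k + n + k)) x) = G.dist x t := by
    rw [dist_apply hG (pow_mem hτ _), G.dist_comm]
  have hkl : k ≤ k * G.dist t (τ t) := Nat.le_mul_of_pos_right k hpos
  have t1 := hG.1.dist_triangle (u := t) (v := (τ ^ k) t) (w := (τ ^ k) w)
  have t2 := hG.1.dist_triangle (u := (τ ^ k) w) (v := (τ ^ (k + n)) t) (w := (τ ^ (k + n + k)) t)
  have t3 := hG.1.dist_triangle (u := t) (v := (τ ^ k) w) (w := (τ ^ (k + n + k)) t)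
  have e5 := hd (k + n + k)
  rw [add_mul, add_mul] at e5
  have e6 := hd k
  have hmem : OnGeodesic G t ((τ ^ (k + n + k)) t) ((τ ^ k) w) := by
    unfold OnGeodesic
    omega
  have s := G.dist_comm (u := t) (v := x)
  rcases hmem.thin hG x with h | h
  · unfold OnGeodesic at h
    omega
  · rcases h.thin hG ((τ ^ (k + n + k)) x) with h | h
    · exact h
    · unfold OnGeodesic at h
      have s' := G.dist_comm (u := (τ ^ (k + n + k)) t) (v := (τ ^ (k + n + k)) x)
      omega

end Axis

/-! ### Gap counts along geodesics -/

section Gaps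

/-- The mod-2 gap count of a list of vertices: at `k` it is the parity of the number of pairs of
consecutive entries at distance `k`. -/
noncomputable def gapSum (G : SimpleGraph V) : List V → (ℕ →₀ ZMod 2)
  | [] => 0
  | [_] => 0
  | a :: b :: l => Finsupp.single (G.dist a b) 1 + gapSum G (b :: l)

/-- The Hamming weight of a finitely supported vector over `ZMod 2`. -/
noncomputable def wt (F : ℕ →₀ ZMod 2) : ℕ := F.support.card

lemma wt_add_le (F F' : ℕ →₀ ZMod 2) : wt (F + F') ≤ wt F + wt F' := by
  classical
  exact (Finset.card_le_card Finsupp.support_add).trans (Finset.card_union_le _ _)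

lemma wt_single_le (k : ℕ) (a : ZMod 2) : wt (Finsupp.single k a) ≤ 1 := by
  classical
  exact (Finset.card_le_card Finsupp.support_single_subset).trans (by simp)

lemma finsupp_add_self (F : ℕ →₀ ZMod 2) : F + F = 0 := by
  ext k
  simp [CharTwo.add_self_eq_zero]

variable {G : SimpleGraph V}

lemma gapSum_append_cons (l₁ : List V) (m : V) (l₂ : List V) :
    gapSum G (l₁ ++ m :: l₂) = gapSum G (l₁ ++ [m]) + gapSum G (m :: l₂) := by
  induction l₁ with
  | nil => simp [gapSum]
  | cons a l ih =>
    cases l with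
    | nil => simp [gapSum]
    | cons b l =>
      simp only [List.cons_append, gapSum] at ih ⊢
      rw [ih, add_assoc]

lemma wt_gapSum_append_le (l₁ l₂ : List V) :
    wt (gapSum G (l₁ ++ l₂) + gapSum G l₁ + gapSum G l₂) ≤ 1 := by
  rcases List.eq_nil_or_concat l₁ with rfl | ⟨l, a, rfl⟩
  · simp [gapSum, finsupp_add_self, wt]
  · cases l₂ with
    | nil => simp [gapSum, finsupp_add_self, wt]
    | cons b l₂ =>
      have h : gapSum G (l ++ [a] ++ b :: l₂) + gapSum G (l ++ [a]) + gapSum G (b :: l₂)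
          = Finsupp.single (G.dist a b) 1 := by
        rw [List.append_assoc, List.singleton_append, gapSum_append_cons, gapSum]
        calc _ = (gapSum G (l ++ [a]) + gapSum G (l ++ [a])) + Finsupp.single (G.dist a b) 1
              + (gapSum G (b :: l₂) + gapSum G (b :: l₂)) := by abel
          _ = _ := by rw [finsupp_add_self, finsupp_add_self, zero_add, add_zero]
      rw [List.concat_eq_append, h]
      exact wt_single_le _ _

lemma gapSum_reverse (l : List V) : gapSum G l.reverse = gapSum G l := by
  induction l with
  | nil => rfl
  | cons a l ih =>
    cases l with
    | nil => rfl
    | cons b l =>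
      rw [List.reverse_cons, List.reverse_cons, List.append_assoc, List.singleton_append,
        gapSum_append_cons, ← List.reverse_cons, ih]
      simp [gapSum, G.dist_comm (u := b) (v := a), add_comm]

lemma gapSum_map (hG : G.IsTree) {g : Equiv.Perm V} (hg : g ∈ autGroup G) (l : List V) :
    gapSum G (l.map g) = gapSum G l := by
  induction l with
  | nil => rfl
  | cons a l ih =>
    cases l with
    | nil => rfl
    | cons b l =>
      simp only [List.map_cons, gapSum] at ih ⊢
      rw [ih, dist_apply hG hg]

/-- The vertices of the geodesic from `u` to `v` in a tree, in order. -/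
noncomputable def geod (hG : G.IsTree) (u v : V) : List V :=
  (hG.existsUnique_path u v).choose.support

lemma geod_eq_support (hG : G.IsTree) {u v : V} {p : G.Walk u v} (hp : p.IsPath) :
    geod hG u v = p.support := by
  have h := (hG.existsUnique_path u v).choose_spec.1
  rw [geod, (hG.existsUnique_path u v).unique h hp]

lemma mem_geod (hG : G.IsTree) {u v w : V} : w ∈ geod hG u v ↔ OnGeodesic G u v w :=
  mem_support_iff_onGeodesic hG (hG.existsUnique_path u v).choose_spec.1

lemma geod_nodup (hG : G.IsTree) (u v : V) : (geod hG u v).Nodup :=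
  (hG.existsUnique_path u v).choose_spec.1.support_nodup

lemma geod_symm (hG : G.IsTree) (u v : V) : geod hG v u = (geod hG u v).reverse := by
  obtain ⟨p, hp, -⟩ := hG.1.exists_path_of_dist u v
  rw [geod_eq_support hG hp, geod_eq_support hG hp.reverse, SimpleGraph.Walk.support_reverse]

lemma geod_map (hG : G.IsTree) {g : Equiv.Perm V} (hg : g ∈ autGroup G) (u v : V) :
    geod hG (g u) (g v) = (geod hG u v).map g := by
  obtain ⟨p, hp, -⟩ := hG.1.exists_path_of_dist u v
  let φ : G →g G := ⟨g, fun {x y} h => (hg x y).2 h⟩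
  have hq : (p.map φ).IsPath := by
    rw [SimpleGraph.Walk.isPath_def, SimpleGraph.Walk.support_map]
    exact hp.support_nodup.map g.injective
  have := geod_eq_support hG hq
  rw [SimpleGraph.Walk.support_map, ← geod_eq_support hG hp] at this
  exact this

lemma geod_split (hG : G.IsTree) {u v m : V} (hm : OnGeodesic G u v m) :
    ∃ l₁ l₂, geod hG u v = l₁ ++ m :: l₂ ∧ geod hG u m = l₁ ++ [m] ∧ geod hG m v = m :: l₂ := by
  obtain ⟨p, hp, hpl⟩ := hG.1.exists_path_of_dist u m
  obtain ⟨q, hq, hql⟩ := hG.1.exists_path_of_dist m v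
  have hpq : (p.append q).IsPath := by
    apply SimpleGraph.Walk.isPath_of_length_eq_dist
    rw [SimpleGraph.Walk.length_append, hpl, hql]
    exact hm
  have h1 : p.support = p.support.dropLast ++ [m] := by
    conv_lhs => rw [← List.dropLast_append_getLast p.support_ne_nil]
    simp
  have h2 : q.support = m :: q.support.tail := (SimpleGraph.Walk.cons_tail_support q).symm
  refine ⟨p.support.dropLast, q.support.tail, ?_, ?_, ?_⟩
  · rw [geod_eq_support hG hpq, SimpleGraph.Walk.support_append]
    nth_rewrite 1 [h1]
    rw [List.append_assoc, List.singleton_append]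
  · rw [geod_eq_support hG hp, ← h1]
  · rw [geod_eq_support hG hq, ← h2]

open Classical in
/-- The mod-2 gap count of the vertices satisfying `P` along the geodesic from `u` to `v`. -/
noncomputable def gap (hG : G.IsTree) (P : V → Prop) (u v : V) : ℕ →₀ ZMod 2 :=
  gapSum G ((geod hG u v).filter (fun w => decide (P w)))

variable (P : V → Prop)

lemma gap_symm (hG : G.IsTree) (u v : V) : gap hG P v u = gap hG P u v := by
  rw [gap, geod_symm, List.filter_reverse, gapSum_reverse, gap]

lemma gap_self (hG : G.IsTree) (u : V) : gap hG P u u = 0 := by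
  rw [gap, geod_eq_support hG (SimpleGraph.Walk.IsPath.nil (u := u))]
  by_cases h : P u <;> simp [h, gapSum]

lemma gap_map (hG : G.IsTree) {g : Equiv.Perm V} (hg : g ∈ autGroup G)
    (hP : ∀ v, P (g v) ↔ P v) (u v : V) : gap hG P (g u) (g v) = gap hG P u v := by
  classical
  have : ((fun w => decide (P w)) ∘ g) = fun w => decide (P w) := by
    funext w
    simp [hP]
  rw [gap, geod_map hG hg, List.filter_map, gapSum_map hG hg, this, gap]

/-- Cutting a geodesic at a marked vertex loses no gap. -/
lemma gap_split (hG : G.IsTree) {u v m : V} (hm : OnGeodesic G u v m) (hPm : P m) :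
    gap hG P u v = gap hG P u m + gap hG P m v := by
  obtain ⟨l₁, l₂, h1, h2, h3⟩ := geod_split hG hm
  simp only [gap, h1, h2, h3, List.filter_append, List.filter_cons, hPm, decide_true, if_true,
    List.filter_nil]
  rw [gapSum_append_cons]

lemma wt_gap_split_le (hG : G.IsTree) {u v m : V} (hm : OnGeodesic G u v m) :
    wt (gap hG P u v + gap hG P u m + gap hG P m v) ≤ 1 := by
  by_cases hPm : P m
  · rw [gap_split P hG hm hPm, add_assoc, finsupp_add_self]
    simp [wt]
  · obtain ⟨l₁, l₂, h1, h2, h3⟩ := geod_split hG hm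
    simp only [gap, h1, h2, h3, List.filter_append, List.filter_cons, hPm, decide_false,
      List.filter_nil, Bool.false_eq_true, if_false, List.append_nil]
    exact wt_gapSum_append_le _ _

/-- The gap count is additive on geodesic triangles up to three gaps, namely those straddling the
median: the three legs of the tripod are each counted twice and cancel. -/
lemma wt_gap_triangle_le (hG : G.IsTree) (u v w : V) :
    wt (gap hG P u v + gap hG P v w + gap hG P u w) ≤ 3 := by
  obtain ⟨m, h1, h2, h3⟩ := exists_median hG u v w
  have w1 := wt_gap_split_le P hG h1
  have w2 := wt_gap_split_le P hG h2
  have w3 := wt_gap_split_le P hG h3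
  rw [gap_symm P hG m v] at w2
  have e : gap hG P u v + gap hG P v w + gap hG P u w =
      (gap hG P u v + gap hG P u m + gap hG P m v) +
      (gap hG P v w + gap hG P m v + gap hG P m w) +
      (gap hG P u w + gap hG P u m + gap hG P m w) := by
    symm
    calc _ = gap hG P u v + gap hG P v w + gap hG P u w + (gap hG P u m + gap hG P u m) +
          (gap hG P m v + gap hG P m v) + (gap hG P m w + gap hG P m w) := by abel
      _ = _ := by simp only [finsupp_add_self, add_zero]
  rw [e]
  have a1 := wt_add_le ((gap hG P u v + gap hG P u m + gap hG P m v) +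
      (gap hG P v w + gap hG P m v + gap hG P m w)) (gap hG P u w + gap hG P u m + gap hG P m w)
  have a2 := wt_add_le (gap hG P u v + gap hG P u m + gap hG P m v)
      (gap hG P v w + gap hG P m v + gap hG P m w)
  omega

/-- Consecutive marked vertices contribute a single gap. -/
lemma gap_eq_single (hG : G.IsTree) {u v : V} (huv : u ≠ v) (hu : P u) (hv : P v)
    (h : ∀ w, OnGeodesic G u v w → P w → w = u ∨ w = v) :
    gap hG P u v = Finsupp.single (G.dist u v) 1 := by
  classical
  have hperm : ((geod hG u v).filter (fun w => decide (P w))).Perm [u, v] := by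
    rw [List.perm_ext_iff_of_nodup ((geod_nodup hG u v).filter _) (by simp [huv])]
    intro w
    simp only [List.mem_filter, mem_geod, decide_eq_true_eq, List.mem_cons, List.not_mem_nil,
      or_false]
    constructor
    · exact fun hw => h w hw.1 hw.2
    · rintro (rfl | rfl)
      · exact ⟨onGeodesic_left _ _, hu⟩
      · exact ⟨onGeodesic_right _ _, hv⟩
  have hlist := List.perm_pair.1 hperm
  unfold gap
  rcases hlist with e | e
  · simp [e, gapSum]
  · simp [e, gapSum, G.dist_comm (u := v) (v := u)]

end Gaps

/-! ### Gap counts of group elements -/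

section QuasiCocycle

variable {G : SimpleGraph V} {P : V → Prop} {H : Subgroup (Equiv.Perm V)}

lemma wt_gap_mul_le (hG : G.IsTree) (hH : ∀ g ∈ H, g ∈ autGroup G)
    (hP : ∀ g ∈ H, ∀ v, P (g v) ↔ P v) (z : V) {g h : Equiv.Perm V} (hg : g ∈ H) :
    wt (gap hG P z ((g * h) z)) ≤ wt (gap hG P z (g z)) + wt (gap hG P z (h z)) + 3 := by
  have w := wt_gap_triangle_le P hG z (g z) ((g * h) z)
  rw [Equiv.Perm.mul_apply, gap_map P hG (hH g hg) (hP g hg)] at w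
  rw [Equiv.Perm.mul_apply]
  have e : gap hG P z (g (h z)) = (gap hG P z (g z) + gap hG P z (h z) + gap hG P z (g (h z))) +
      (gap hG P z (g z) + gap hG P z (h z)) := by
    symm
    calc _ = gap hG P z (g (h z)) + (gap hG P z (g z) + gap hG P z (g z)) +
          (gap hG P z (h z) + gap hG P z (h z)) := by abel
      _ = _ := by simp only [finsupp_add_self, add_zero]
  have a1 := wt_add_le (gap hG P z (g z) + gap hG P z (h z) + gap hG P z (g (h z)))
    (gap hG P z (g z) + gap hG P z (h z))
  rw [← e] at a1
  have a2 := wt_add_le (gap hG P z (g z)) (gap hG P z (h z))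
  omega

lemma gap_inv (hG : G.IsTree) (hH : ∀ g ∈ H, g ∈ autGroup G)
    (hP : ∀ g ∈ H, ∀ v, P (g v) ↔ P v) (z : V) {g : Equiv.Perm V} (hg : g ∈ H) :
    gap hG P z (g⁻¹ z) = gap hG P z (g z) := by
  rw [← gap_map P hG (hH g hg) (hP g hg), perm_apply_inv, gap_symm]

/-- Conjugation changes the gap count by a bounded amount, independent of the conjugator: the
contributions of `c` and `c⁻¹` cancel modulo 2. -/
lemma wt_gap_conj_le (hG : G.IsTree) (hH : ∀ g ∈ H, g ∈ autGroup G)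
    (hP : ∀ g ∈ H, ∀ v, P (g v) ↔ P v) (z : V) {c g : Equiv.Perm V} (hc : c ∈ H) (hg : g ∈ H) :
    wt (gap hG P z ((c * g * c⁻¹) z)) ≤ wt (gap hG P z (g z)) + 6 := by
  have w1 := wt_gap_triangle_le P hG z (c z) ((c * g * c⁻¹) z)
  have w2 := wt_gap_triangle_le P hG (c z) (c (g z)) ((c * g * c⁻¹) z)
  have e1 : gap hG P (c z) (c (g z)) = gap hG P z (g z) := gap_map P hG (hH c hc) (hP c hc) _ _
  have e2 : gap hG P (c (g z)) ((c * g * c⁻¹) z) = gap hG P z (c z) := by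
    rw [Equiv.Perm.mul_apply, Equiv.Perm.mul_apply, gap_map P hG (hH c hc) (hP c hc),
      gap_map P hG (hH g hg) (hP g hg), gap_inv hG hH hP z hc]
  rw [e1, e2] at w2
  set p := gap hG P z (c z)
  set r := gap hG P (c z) ((c * g * c⁻¹) z)
  set q := gap hG P z ((c * g * c⁻¹) z)
  set a := gap hG P z (g z)
  have e : q = ((p + r + q) + (a + p + r)) + a := by
    symm
    calc _ = q + (p + p) + (r + r) + (a + a) := by abel
      _ = _ := by simp only [finsupp_add_self, add_zero]
  have a1 := wt_add_le ((p + r + q) + (a + p + r)) a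
  have a2 := wt_add_le (p + r + q) (a + p + r)
  rw [← e] at a1
  omega

/-- Products of at most `N` conjugates of `g` or `g⁻¹` have uniformly bounded gap count. -/
lemma wt_gap_prod_le (hG : G.IsTree) (hH : ∀ g ∈ H, g ∈ autGroup G)
    (hP : ∀ g ∈ H, ∀ v, P (g v) ↔ P v) (z : V) (g : H) (l : List H)
    (hl : ∀ x ∈ l, ∃ c : H, x = c * g * c⁻¹ ∨ x = c * g⁻¹ * c⁻¹) :
    wt (gap hG P z ((l.prod : Equiv.Perm V) z)) ≤
      l.length * (wt (gap hG P z ((g : Equiv.Perm V) z)) + 9) := by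
  induction l with
  | nil => simp [gap_self, wt]
  | cons b l ih =>
    have ih' := ih fun x hx => hl x (List.mem_cons_of_mem _ hx)
    have hb : wt (gap hG P z ((b : Equiv.Perm V) z)) ≤
        wt (gap hG P z ((g : Equiv.Perm V) z)) + 6 := by
      obtain ⟨c, rfl | rfl⟩ := hl b (by simp)
      · exact wt_gap_conj_le hG hH hP z c.2 g.2
      · have := wt_gap_conj_le hG hH hP z c.2 (inv_mem g.2)
        rw [gap_inv hG hH hP z g.2] at this
        exact this
    have hm := wt_gap_mul_le hG hH hP z (g := b) (h := (l.prod : H)) b.2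
    rw [List.prod_cons, List.length_cons, Subgroup.coe_mul, add_mul, one_mul]
    omega

/-- A boundedly simple group of automorphisms preserving the marking has bounded gap count. -/
lemma exists_wt_gap_bound (hG : G.IsTree) (hH : ∀ g ∈ H, g ∈ autGroup G)
    (hP : ∀ g ∈ H, ∀ v, P (g v) ↔ P v) (z : V) (hbs : IsBoundedlySimple H) (hnt : H ≠ ⊥) :
    ∃ B, ∀ h ∈ H, wt (gap hG P z (h z)) ≤ B := by
  obtain ⟨N, hN⟩ := hbs
  obtain ⟨g, hg, hg1⟩ := H.bot_or_exists_ne_one.resolve_left hnt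
  refine ⟨N * (wt (gap hG P z (g z)) + 9), fun h hh => ?_⟩
  by_cases h1 : h = 1
  · subst h1
    simp [gap_self, wt]
  · obtain ⟨l, hlen, hl, hprod⟩ := hN ⟨g, hg⟩ ⟨h, hh⟩ (by simpa using hg1) (by simpa using h1)
    have := wt_gap_prod_le hG hH hP z ⟨g, hg⟩ l hl
    rw [hprod] at this
    exact this.trans (Nat.mul_le_mul_right _ hlen)

end QuasiCocycle

/-! ### Elements with large gap count -/

section LongElements

variable {G : SimpleGraph V} {P : V → Prop}

/-- The product `τ γ τ² γ ⋯ τⁿ γ τⁿ⁺¹ γ`. -/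
def longElt (τ γ : Equiv.Perm V) : ℕ → Equiv.Perm V
  | 0 => τ ^ 1 * γ
  | n + 1 => longElt τ γ n * (τ ^ (n + 2) * γ)

lemma longElt_mem {H : Subgroup (Equiv.Perm V)} {τ γ : Equiv.Perm V} (hτ : τ ∈ H) (hγ : γ ∈ H)
    (n : ℕ) : longElt τ γ n ∈ H := by
  induction n with
  | zero => exact mul_mem (pow_mem hτ _) hγ
  | succ n ih => exact mul_mem ih (mul_mem (pow_mem hτ _) hγ)

/-- Since `γ` moves `s`, the geodesic segments from `z` to `τⁱ z` concatenate without backtracking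
to the geodesic from `z` to `longElt τ γ n z`, and contribute one gap each. -/
lemma gap_longElt (hG : G.IsTree) {τ γ : Equiv.Perm V} (hτ : τ ∈ autGroup G) (hγ : γ ∈ autGroup G)
    (hPτ : ∀ v, P (τ v) ↔ P v) (hPγ : ∀ v, P (γ v) ↔ P v) {z s : V} (hz : P z) (hzs : G.Adj z s)
    (hγz : γ z = z) (hγs : γ s ≠ s)
    (hs : ∀ n, n ≠ 0 → OnGeodesic G z ((τ ^ n) z) s)
    (hs' : ∀ n, n ≠ 0 → OnGeodesic G z ((τ ^ n) z) ((τ ^ n) s))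
    (hgap : ∀ n, n ≠ 0 → gap hG P z ((τ ^ n) z) = Finsupp.single (G.dist z ((τ ^ n) z)) 1)
    (n : ℕ) :
    OnGeodesic G z (longElt τ γ n z) (longElt τ γ n (γ⁻¹ s)) ∧
      gap hG P z (longElt τ γ n z) =
        ∑ i ∈ Finset.range (n + 1), Finsupp.single (G.dist z ((τ ^ (i + 1)) z)) 1 := by
  induction n with
  | zero =>
    simp only [longElt, Equiv.Perm.mul_apply, hγz, perm_apply_inv]
    exact ⟨hs' 1 one_ne_zero, by simpa using hgap 1 one_ne_zero⟩
  | succ n ih =>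
    have hmem : longElt τ γ n ∈ autGroup G := longElt_mem hτ hγ n
    have hP' : ∀ v, P (longElt τ γ n v) ↔ P v := by
      have hpow : ∀ k v, P ((τ ^ k) v) ↔ P v := by
        intro k
        induction k with
        | zero => simp
        | succ k ih => intro v; rw [pow_succ, Equiv.Perm.mul_apply, ih, hPτ]
      have : ∀ m v, P (longElt τ γ m v) ↔ P v := by
        intro m
        induction m with
        | zero => intro v; rw [longElt, Equiv.Perm.mul_apply, hpow, hPγ]
        | succ m ih =>
          intro v
          rw [longElt, Equiv.Perm.mul_apply, ih, Equiv.Perm.mul_apply, hpow, hPγ]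
      exact this n
    simp only [longElt, Equiv.Perm.mul_apply, hγz, perm_apply_inv]
    set h := longElt τ γ n
    have hinv : γ⁻¹ z = z := by rw [Equiv.Perm.inv_eq_iff_eq, hγz]
    have hadj : G.Adj (h z) (h (γ⁻¹ s)) := by
      refine (hmem _ _).2 ?_
      have := (inv_mem hγ : γ⁻¹ ∈ autGroup G) z s
      rw [hinv] at this
      exact this.2 hzs
    have hthru : OnGeodesic G z (h ((τ ^ (n + 2)) z)) (h z) := by
      refine onGeodesic_of_adj_ne hG hadj ((hmem _ _).2 hzs) ?_ ih.1
        ((onGeodesic_apply hG hmem).2 (hs (n + 2) (by omega)))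
      intro e
      have := h.injective e
      rw [Equiv.Perm.inv_eq_iff_eq] at this
      exact hγs this.symm
    refine ⟨?_, ?_⟩
    · have h1 := (onGeodesic_apply hG hmem).2 (hs' (n + 2) (by omega))
      unfold OnGeodesic at h1 hthru ⊢
      have t1 := hG.1.dist_triangle (u := z) (v := h z) (w := h ((τ ^ (n + 2)) s))
      have t2 := hG.1.dist_triangle (u := z) (v := h ((τ ^ (n + 2)) s))
        (w := h ((τ ^ (n + 2)) z))
      omega
    · rw [gap_split P hG hthru ((hP' z).2 hz), gap_map P hG hmem hP', ih.2,
        hgap (n + 2) (by omega), Finset.sum_range_succ _ (n + 1)]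

/-- Distinct gap lengths do not cancel. -/
lemma wt_sum_single {d : ℕ → ℕ} (hd : Function.Injective d) (n : ℕ) :
    wt (∑ i ∈ Finset.range n, Finsupp.single (d i) 1) = n := by
  classical
  have : (∑ i ∈ Finset.range n, Finsupp.single (d i) (1 : ZMod 2)).support
      = (Finset.range n).image d := by
    ext k
    simp only [Finsupp.mem_support_iff, Finsupp.finsetSum_apply, Finsupp.single_apply,
      Finset.mem_image, Finset.mem_range]
    constructor
    · intro h
      obtain ⟨i, hi, hi'⟩ := Finset.exists_ne_zero_of_sum_ne_zero h
      refine ⟨i, Finset.mem_range.1 hi, ?_⟩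
      by_contra hne
      exact hi' (if_neg hne)
    · rintro ⟨i, hi, rfl⟩
      simp [hd.eq_iff, hi]
  rw [wt, this, Finset.card_image_of_injective _ hd, Finset.card_range]

end LongElements

/-- the rigidity configuration forbidden by bounded simplicity:
any `γ ∈ Aut_f⁺(A)` fixing `z` must also fix `s`. -/
theorem fix_z_implies_fix_s (G : SimpleGraph V) (hG : G.IsTree) (f : V → I)
    (hnt : autfPlus G f ≠ ⊥) (hbs : IsBoundedlySimple ↥(autfPlus G f))
    (α β : Equiv.Perm V) (hα : α ∈ autfPlus G f) (hβ : β ∈ autfPlus G f)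
    (hαr : IsRotation α) (hβr : IsRotation β)
    (x y z : V) (hxy : x ≠ y) (hxz : x ≠ z) (hyz : y ≠ z)
    (hxram : IsRamification G x) (hyram : IsRamification G y)
    (hzram : IsRamification G z)
    (hαx : α x = x) (hβy : β y = y)
    (hα' : ∀ w, OnGeodesic G x y w → α w = w → w = x)
    (hβ' : ∀ w, OnGeodesic G x y w → β w = w → w = y)
    (htr : IsTranslation G (β * α))
    (t s : V) (hz : z ∉ axisSet G (β * α))
    (htC : t ∈ axisSet G (β * α))
    (htproj : ∀ c ∈ axisSet G (β * α), G.dist z t ≤ G.dist z c)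
    (hs1 : G.Adj z s) (hs2 : OnGeodesic G z t s)
    (hcolor : ∀ w, OnGeodesic G x y w ∨ OnGeodesic G s t w → f w ≠ f z) :
    ∀ γ ∈ autfPlus G f, γ z = z → γ s = s := by
  intro γ hγ hγz
  by_contra hγs
  have hle : ∀ g ∈ autfPlus G f, g ∈ autf G f := fun g hg => autfPlus_le_autf G f hg
  have hH : ∀ g ∈ autfPlus G f, g ∈ autGroup G := fun g hg => autf_le_autGroup G f (hle g hg)
  have hP : ∀ g ∈ autfPlus G f, ∀ v, f (g v) = f z ↔ f v = f z := fun g hg v => by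
    rw [(hle g hg).2 v]
  obtain ⟨B, hB⟩ := exists_wt_gap_bound (P := fun v => f v = f z) hG hH hP z hbs hnt
  have hτm : β * α ∈ autfPlus G f := mul_mem hβ hα
  obtain ⟨τ, hτ_def⟩ : ∃ τ, τ = β * α := ⟨_, rfl⟩
  rw [← hτ_def] at htr hz htC htproj hτm
  have hτ := hH τ hτm
  have hpowm : ∀ n : ℕ, τ ^ n ∈ autfPlus G f := fun n => pow_mem hτm n
  have hpow : ∀ n : ℕ, τ ^ n ∈ autGroup G := fun n => hH _ (hpowm n)
  have hne : t ≠ τ t := fun h => htr.1 ⟨t, h.symm⟩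
  have hpos := hG.1.pos_dist_of_ne hne
  have hvia := fun {n : ℕ} (hn : n ≠ 0) => onGeodesic_via_axis hG hτ htr htC htproj hn
  have hzt : z ≠ t := fun h => hz (h ▸ htC)
  -- the segment from `x` to `τ x = β x` is covered by `[x, y]` and `β [x, y]`
  have hcx : ∀ w, OnGeodesic G x (τ x) w → f w ≠ f z := by
    intro w hw
    rcases hw.thin hG y with h | h
    · exact hcolor w (Or.inl h)
    · rw [hτ_def, Equiv.Perm.mul_apply, hαx] at h
      obtain ⟨v, rfl⟩ := β.surjective w
      rw [(hle β hβ).2]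
      nth_rewrite 1 [← hβy] at h
      exact hcolor v (Or.inl ((onGeodesic_apply hG (hH β hβ)).1 h).symm)
  have hct : ∀ n w, OnGeodesic G t ((τ ^ n) t) w → f w ≠ f z := by
    intro n w hw
    obtain ⟨k, m, h⟩ := exists_pow_onGeodesic hG hτ htr htC x hw
    rw [← (hle _ (hpowm k)).2 w]
    rcases cover_of_onGeodesic_pow hG hτ h with e | ⟨i, v, hv, e⟩
    · rw [e]
      exact hcolor x (Or.inl (onGeodesic_left _ _))
    · rw [e, (hle _ (hpowm i)).2]
      exact hcx v hv
  have hczt : ∀ w, OnGeodesic G z t w → f w = f z → w = z := by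
    intro w hw hfw
    rcases hw.thin hG s with h | h
    · have d1 : G.dist z s = 1 := SimpleGraph.dist_eq_one_iff_adj.2 hs1
      unfold OnGeodesic at h
      rw [d1] at h
      by_cases h0 : G.dist z w = 0
      · exact (eq_of_dist_eq_zero hG h0).symm
      · have e := eq_of_dist_eq_zero hG (a := w) (b := s) (by omega)
        subst e
        exact absurd hfw (hcolor w (Or.inr (onGeodesic_left _ _)))
    · exact absurd hfw (hcolor w (Or.inr h))
  have hdist : ∀ n : ℕ, n ≠ 0 →
      G.dist z ((τ ^ n) z) = 2 * G.dist z t + n * G.dist t (τ t) := fun n hn => (hvia hn).2.2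
  have hsn : ∀ n : ℕ, n ≠ 0 → OnGeodesic G z ((τ ^ n) z) s := by
    intro n hn
    have h1 := (hvia hn).1
    have t1 := hG.1.dist_triangle (u := s) (v := t) (w := (τ ^ n) z)
    have t2 := hG.1.dist_triangle (u := z) (v := s) (w := (τ ^ n) z)
    unfold OnGeodesic at *
    omega
  have hsn' : ∀ n : ℕ, n ≠ 0 → OnGeodesic G z ((τ ^ n) z) ((τ ^ n) s) := by
    intro n hn
    have h1 := (hvia hn).2.1
    have h2 := ((onGeodesic_apply hG (hpow n)).2 hs2).symm
    have t1 := hG.1.dist_triangle (u := z) (v := (τ ^ n) t) (w := (τ ^ n) s)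
    have t2 := hG.1.dist_triangle (u := z) (v := (τ ^ n) s) (w := (τ ^ n) z)
    unfold OnGeodesic at *
    omega
  have hgap : ∀ n : ℕ, n ≠ 0 → gap hG (fun v => f v = f z) z ((τ ^ n) z) =
      Finsupp.single (G.dist z ((τ ^ n) z)) 1 := by
    intro n hn
    refine gap_eq_single _ hG ?_ rfl ((hle _ (hpowm n)).2 z) ?_
    · intro e
      have h := hdist n hn
      rw [← e, SimpleGraph.dist_self] at h
      have := hG.1.pos_dist_of_ne hzt
      omega
    · intro w hw hfw
      rcases hw.thin hG t with h | h
      · exact Or.inl (hczt w h hfw)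
      · rcases h.thin hG ((τ ^ n) t) with h | h
        · exact absurd hfw (hct n w h)
        · right
          obtain ⟨v, rfl⟩ := (τ ^ n).surjective w
          rw [hczt v ((onGeodesic_apply hG (hpow n)).1 h).symm
            (((hle _ (hpowm n)).2 v).symm.trans hfw)]
  have hinj : Function.Injective fun i : ℕ => G.dist z ((τ ^ (i + 1)) z) := by
    intro i j hij
    simp only [hdist _ (Nat.succ_ne_zero _)] at hij
    have := Nat.eq_of_mul_eq_mul_right hpos (Nat.add_left_cancel hij)
    omega
  have hfin := hB (longElt τ γ B) (longElt_mem hτm hγ B)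
  rw [(gap_longElt (P := fun v => f v = f z) hG hτ (hH γ hγ) (hP τ hτm) (hP γ hγ) rfl hs1 hγz hγs hsn hsn' hgap B).2,
    wt_sum_single hinj] at hfin
  omega

end BSTrees
end
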